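/- arXiv:1403.3307 — 2 statements merged into one kernel-verified Lean document; each statement's English description precedes it below -/
import Mathlib

section
/- Let SO(3) act on V = ℂ³ by matrix multiplication (the complexified standard action), with moment map J : ℂ³ → so(3)*, J(z)(ξ) = Im⟨ξz, z⟩ for ξ ∈ so(3), where ⟨u,v⟩ = Σᵢ uᵢ\overline{vᵢ}, and set M = J⁻¹(0), M₀ = M/SO(3). Let Γ = {±1} act on ℂ by multiplication, with orbit space ℂ/Γ. Then there exists a ℤ-graded regular diffeomorphism from M₀ to ℂ/Γ. -/
/-!
Statement 14: The symplectic quotient of the SO(3)-module ℂ³ (the SU(2)-module R₂), with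
moment map `J(z)(ξ) = Im⟨ξz, z⟩`, is ℤ-graded regularly diffeomorphic to `ℂ/{±1}`.
-/

namespace Stmt14

noncomputable section

open MvPolynomial Complex

/-- Evaluation of a real polynomial in the real coordinates (indexed by `ι × Bool`) at a
point of `ι → ℂ`. -/
def evalR {ι : Type} (p : MvPolynomial (ι × Bool) ℝ) (z : ι → ℂ) : ℝ :=
  MvPolynomial.eval (fun q => if q.2 then (z q.1).im else (z q.1).re) p

/-- The special orthogonal group SO(3) as a set of real matrices. -/
def SO3 : Set (Matrix (Fin 3) (Fin 3) ℝ) :=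
  {g | g * g.transpose = 1 ∧ g.det = 1}

/-- The action of a real matrix `g` on ℂ³. -/
def act (g : Matrix (Fin 3) (Fin 3) ℝ) (z : Fin 3 → ℂ) : Fin 3 → ℂ :=
  (g.map Complex.ofReal).mulVec z

/-- The zero set `M = J⁻¹(0)` of the moment map `J(z)(ξ) = Im⟨ξz, z⟩`, `ξ` ranging over
`so(3)` (real skew-symmetric matrices). -/
def Mset : Set (Fin 3 → ℂ) :=
  {z | ∀ ξ : Matrix (Fin 3) (Fin 3) ℝ, ξ.transpose = -ξ →
    (∑ i, (ξ.map Complex.ofReal).mulVec z i * (starRingEnd ℂ) (z i)).im = 0}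

/-- Orbit equivalence on `M` for the SO(3)-action. -/
def relM (x y : Mset) : Prop :=
  ∃ g ∈ SO3, (y : Fin 3 → ℂ) = act g (x : Fin 3 → ℂ)

/-- The symplectic quotient `M₀ = M/SO(3)` with the quotient topology. -/
def M₀ : Type := Quot relM

instance : TopologicalSpace M₀ := instTopologicalSpaceQuot

/-- The degree-`d` regular functions on `M₀`. -/
def RegM (d : ℕ) : Set (M₀ → ℝ) :=
  {f | ∃ p : MvPolynomial (Fin 3 × Bool) ℝ, p.IsHomogeneous d ∧
    (∀ g ∈ SO3, ∀ z : Fin 3 → ℂ, evalR p (act g z) = evalR p z) ∧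
    ∀ x : Mset, f (Quot.mk _ x) = evalR p (x : Fin 3 → ℂ)}

/-- Orbit equivalence on ℂ for the action of `Γ = {±1}`. -/
def relC (z v : ℂ) : Prop := v = z ∨ v = -z

/-- The orbifold `ℂ/{±1}` with the quotient topology. -/
def Y : Type := Quot relC

instance : TopologicalSpace Y := instTopologicalSpaceQuot

/-- The degree-`d` regular functions on `ℂ/{±1}`. -/
def RegY (d : ℕ) : Set (Y → ℝ) :=
  {f | ∃ p : MvPolynomial (Unit × Bool) ℝ, p.IsHomogeneous d ∧
    (∀ z : ℂ, evalR p (fun _ => -z) = evalR p (fun _ => z)) ∧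
    ∀ z : ℂ, f (Quot.mk _ z) = evalR p (fun _ => z)}

/-!
For a finite type `ι` with at least two elements, let `SO(ι)` act on `ι → ℂ`. The zero level of the
moment map consists of the `z` for which all `zᵢ * conj zⱼ` are real, that is, of the complex
multiples of real vectors. As `SO(ι)` is transitive on the spheres of `ι → ℝ`, every orbit in the
zero level meets a given coordinate axis `ℂ`, and a rotation taking each vector of the axis to its
negative yields a map `ψ` from `ℂ/{±1}` onto the symplectic quotient. The invariant form `∑ zᵢ²`
restricts to `w²` on the axis, and `w ↦ w²` induces a closed embedding of `ℂ/{±1}` in `ℂ`; hence `ψ`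
is a homeomorphism.

Regular functions on the quotient restrict to the axis. Conversely, an even homogeneous polynomial
in `Re w`, `Im w` either vanishes (odd degree) or is a polynomial in products of two coordinates
(even degree), and those are the restrictions of the invariants `Re z · Re z`, `Re z · Im z` and
`Im z · Im z`.
-/

open Matrix Module Topology

section Rotations

theorem det_reflection_orthogonal_span_singleton {E : Type*} [NormedAddCommGroup E]
    [InnerProductSpace ℝ E] [FiniteDimensional ℝ E] {v : E} (hv : v ≠ 0) :
    LinearMap.det (ℝ ∙ v)ᗮ.reflection.toLinearMap = -1 := by
  rw [Submodule.det_reflection, Submodule.orthogonal_orthogonal, finrank_span_singleton hv,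
    pow_one]

theorem exists_ne_zero_mem_orthogonal_span_singleton {E : Type*} [NormedAddCommGroup E]
    [InnerProductSpace ℝ E] (hE : 1 < finrank ℝ E) (v : E) :
    ∃ a ∈ (ℝ ∙ v)ᗮ, a ≠ 0 := by
  refine Submodule.exists_mem_ne_zero_of_ne_bot fun hbot => ?_
  have htop : (ℝ ∙ v) = ⊤ := Submodule.orthogonal_eq_bot_iff.1 hbot
  exact hE.not_ge <| finrank_le_one v fun u =>
    Submodule.mem_span_singleton.1 (htop ▸ Submodule.mem_top)

theorem exists_linearIsometryEquiv_det_eq_one_apply_eq {E : Type*} [NormedAddCommGroup E]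
    [InnerProductSpace ℝ E] (hE : 1 < finrank ℝ E) {v w : E} (h : ‖v‖ = ‖w‖) :
    ∃ φ : E ≃ₗᵢ[ℝ] E, LinearMap.det φ.toLinearMap = 1 ∧ φ v = w := by
  have : FiniteDimensional ℝ E := FiniteDimensional.of_finrank_pos (zero_lt_one.trans hE)
  obtain rfl | hvw := eq_or_ne v w
  · exact ⟨.refl ℝ E, LinearMap.det_id, rfl⟩
  -- The reflection exchanging `v` and `w` has determinant `-1`; one fixing `w` corrects the sign.
  obtain ⟨a, haw, ha⟩ := exists_ne_zero_mem_orthogonal_span_singleton hE w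
  refine ⟨(ℝ ∙ (v - w))ᗮ.reflection.trans (ℝ ∙ a)ᗮ.reflection, ?_, ?_⟩
  · calc LinearMap.det ((ℝ ∙ a)ᗮ.reflection.toLinearMap ∘ₗ (ℝ ∙ (v - w))ᗮ.reflection.toLinearMap)
        = -1 * -1 := by
          rw [LinearMap.det_comp, det_reflection_orthogonal_span_singleton ha,
            det_reflection_orthogonal_span_singleton (sub_ne_zero.2 hvw)]
      _ = 1 := by norm_num
  · rw [LinearIsometryEquiv.trans_apply, Submodule.reflection_sub h]
    refine Submodule.reflection_mem_subspace_eq_self ?_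
    rw [Submodule.mem_orthogonal_singleton_iff_inner_right] at haw ⊢
    rwa [real_inner_comm]

/-- The special orthogonal group of real `ι × ι` matrices, as a set; `SO (Fin 3)` is `SO3`. -/
def SO (ι : Type*) [Fintype ι] [DecidableEq ι] : Set (Matrix ι ι ℝ) :=
  {g | g * g.transpose = 1 ∧ g.det = 1}

variable {ι : Type*} [Fintype ι]

theorem exists_mem_SO_mulVec_eq [DecidableEq ι] [Nontrivial ι] {v w : ι → ℝ}
    (h : v ⬝ᵥ v = w ⬝ᵥ w) : ∃ g ∈ SO ι, g *ᵥ v = w := by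
  have hnorm : ‖WithLp.toLp 2 v‖ = ‖WithLp.toLp 2 w‖ := by
    rw [← sq_eq_sq₀ (norm_nonneg _) (norm_nonneg _), ← real_inner_self_eq_norm_sq,
      ← real_inner_self_eq_norm_sq]
    simpa only [EuclideanSpace.inner_toLp_toLp, star_trivial] using h
  obtain ⟨φ, hdet, hφ⟩ := exists_linearIsometryEquiv_det_eq_one_apply_eq
    (by rw [finrank_euclideanSpace]; exact Fintype.one_lt_card) hnorm
  let b := EuclideanSpace.basisFun ι ℝ
  refine ⟨φ.toLinearMap.toMatrix b.toBasis b.toBasis, ⟨?_, ?_⟩, ?_⟩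
  · simpa only [star_eq_conjTranspose, conjTranspose_eq_transpose_of_trivial] using
      mem_unitaryGroup_iff.1 (φ.toMatrix_mem_unitaryGroup b b)
  · rw [LinearMap.det_toMatrix, hdet]
  · calc _ = ⇑(b.toBasis.repr (φ (WithLp.toLp 2 v))) :=
          LinearMap.toMatrix_mulVec_repr b.toBasis b.toBasis φ.toLinearMap (WithLp.toLp 2 v)
      _ = w := by rw [hφ]; rfl

theorem mulVec_dotProduct_mulVec_of_transpose_mul_self {R : Type*} [CommSemiring R]
    [DecidableEq ι] {A : Matrix ι ι R} (hA : Aᵀ * A = 1) (x y : ι → R) :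
    A *ᵥ x ⬝ᵥ A *ᵥ y = x ⬝ᵥ y := by
  rw [dotProduct_mulVec, ← mulVec_transpose, mulVec_mulVec, hA, one_mulVec]

theorem transpose_mul_self_of_mem_SO [DecidableEq ι] {g : Matrix ι ι ℝ} (hg : g ∈ SO ι) :
    gᵀ * g = 1 :=
  mul_eq_one_comm.1 hg.1

theorem transpose_map_ofReal_mul_self_of_mem_SO [DecidableEq ι] {g : Matrix ι ι ℝ}
    (hg : g ∈ SO ι) : (g.map ofReal)ᵀ * g.map ofReal = 1 := by
  have h := congrArg ofRealHom.mapMatrix (transpose_mul_self_of_mem_SO hg)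
  rwa [map_mul, map_one] at h

variable [DecidableEq ι]

theorem map_ofReal_mulVec_single_mul (g : Matrix ι ι ℝ) (i₀ : ι) (c : ℂ) (x : ℝ) :
    g.map ofReal *ᵥ Pi.single i₀ (c * x) = fun i => c * ((g *ᵥ Pi.single i₀ x) i : ℝ) := by
  ext i
  simp [mul_left_comm]

variable [Nontrivial ι]

theorem exists_mem_SO_mul_ofReal_eq_mulVec_single (i₀ : ι) (c : ℂ) (r : ι → ℝ) :
    ∃ g ∈ SO ι, ∃ w : ℂ, (fun i => c * r i) = g.map ofReal *ᵥ Pi.single i₀ w := by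
  have hlength : Pi.single i₀ √(r ⬝ᵥ r) ⬝ᵥ Pi.single i₀ √(r ⬝ᵥ r) = r ⬝ᵥ r := by
    rw [dotProduct_single, Pi.single_eq_same]
    exact Real.mul_self_sqrt (Finset.sum_nonneg fun i _ => mul_self_nonneg (r i))
  obtain ⟨g, hg, hgr⟩ := exists_mem_SO_mulVec_eq hlength
  exact ⟨g, hg, c * √(r ⬝ᵥ r), by rw [map_ofReal_mulVec_single_mul, hgr]⟩

theorem exists_mem_SO_single_neg_eq_mulVec_single (i₀ : ι) :
    ∃ g ∈ SO ι, ∀ w : ℂ, Pi.single i₀ (-w) = g.map ofReal *ᵥ Pi.single i₀ w := by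
  obtain ⟨g, hg, hneg⟩ := exists_mem_SO_mulVec_eq
    (v := Pi.single i₀ (1 : ℝ)) (w := -Pi.single i₀ 1) (by rw [neg_dotProduct_neg])
  refine ⟨g, hg, fun w => ?_⟩
  have h := map_ofReal_mulVec_single_mul g i₀ w 1
  rw [hneg, ofReal_one, mul_one] at h
  rw [h]
  ext i
  obtain rfl | hi := eq_or_ne i i₀ <;> simp [*]

end Rotations

section MomentMap

theorem exists_eq_mul_ofReal_of_im_mul_conj_eq_zero {ι : Type*} {z : ι → ℂ}
    (hz : ∀ i j, (z i * (starRingEnd ℂ) (z j)).im = 0) :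
    ∃ (c : ℂ) (r : ι → ℝ), z = fun i => c * r i := by
  by_cases h : z = 0
  · exact ⟨0, 0, by rw [h]; ext; simp⟩
  obtain ⟨k, hk⟩ := Function.ne_iff.1 h
  refine ⟨z k, fun i => (z i / z k).re, funext fun i => ?_⟩
  have him : (z i / z k).im = 0 := by
    rw [div_eq_mul_inv, inv_def, ← mul_assoc, im_mul_ofReal, hz, zero_mul]
  have hre : ((z i / z k).re : ℂ) = z i / z k := conj_eq_iff_re.1 (conj_eq_iff_im.2 him)
  rw [hre, mul_div_cancel₀ _ hk]

variable (ι : Type) [Fintype ι]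

/-- The zero level of the moment map `J(z)(ξ) = Im⟨ξz, z⟩` of `SO(ι)` acting on `ι → ℂ`. -/
def momentZeroLevel : Set (ι → ℂ) :=
  {z | ∀ ξ : Matrix ι ι ℝ, ξ.transpose = -ξ →
    (∑ i, (ξ.map Complex.ofReal).mulVec z i * (starRingEnd ℂ) (z i)).im = 0}

variable {ι}

theorem mem_momentZeroLevel_iff {z : ι → ℂ} :
    z ∈ momentZeroLevel ι ↔ ∀ i j, (z i * (starRingEnd ℂ) (z j)).im = 0 := by
  classical
  constructor
  · intro hz i j
    have hskew : (single j i (1 : ℝ) - single i j 1)ᵀ = -(single j i 1 - single i j 1) := by simp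
    have h := hz _ hskew
    have hmap : (single j i (1 : ℝ) - single i j 1).map ofReal = single j i 1 - single i j 1 := by
      ext k l
      simp [single_apply, apply_ite ofReal]
    have hsum : ∑ k, ((single j i (1 : ℝ) - single i j 1).map ofReal *ᵥ z) k *
        (starRingEnd ℂ) (z k) = z i * (starRingEnd ℂ) (z j) - z j * (starRingEnd ℂ) (z i) := by
      simp [hmap, sub_mulVec, single_mulVec_eq, sub_mul, Pi.single_apply]
    have hconj : z j * (starRingEnd ℂ) (z i) = (starRingEnd ℂ) (z i * (starRingEnd ℂ) (z j)) := by
      rw [map_mul, conj_conj, mul_comm]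
    rw [hsum, hconj, sub_im, conj_im] at h
    linarith
  · intro hz ξ _
    simp only [mulVec, dotProduct, Finset.sum_mul, im_sum, map_apply, mul_assoc, im_ofReal_mul,
      hz, mul_zero, Finset.sum_const_zero]

theorem single_mem_momentZeroLevel [DecidableEq ι] (i₀ : ι) (w : ℂ) :
    Pi.single i₀ w ∈ momentZeroLevel ι := by
  rw [mem_momentZeroLevel_iff]
  intro i j
  by_cases hi : i = i₀ <;> by_cases hj : j = i₀ <;> simp [hi, hj, mul_conj]

theorem exists_mem_SO_eq_mulVec_single_of_mem_momentZeroLevel [DecidableEq ι] [Nontrivial ι]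
    (i₀ : ι) {z : ι → ℂ} (hz : z ∈ momentZeroLevel ι) :
    ∃ g ∈ SO ι, ∃ w : ℂ, z = g.map ofReal *ᵥ Pi.single i₀ w := by
  obtain ⟨c, r, rfl⟩ := exists_eq_mul_ofReal_of_im_mul_conj_eq_zero
    (mem_momentZeroLevel_iff.1 hz)
  exact exists_mem_SO_mul_ofReal_eq_mulVec_single i₀ c r

end MomentMap

section SymplecticQuotient

variable (ι : Type) [Fintype ι] [DecidableEq ι]

/-- Orbit equivalence for `SO(ι)` on the zero level of its moment map. -/
def orbitRel (x y : momentZeroLevel ι) : Prop :=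
  ∃ g ∈ SO ι, (y : ι → ℂ) = g.map ofReal *ᵥ (x : ι → ℂ)

/-- The symplectic quotient of `ι → ℂ` by `SO(ι)`, with the quotient topology;
`SymplecticQuotient (Fin 3)` unfolds to `M₀`. -/
def SymplecticQuotient : Type := Quot (orbitRel ι)

instance : TopologicalSpace (SymplecticQuotient ι) := instTopologicalSpaceQuot

variable {ι}

/-- The map `ℂ/{±1} → SymplecticQuotient ι` induced by the inclusion of `ℂ` in `ι → ℂ` as the
`i₀`-th coordinate axis, which is a slice for the orbits in the zero level. -/
def axisMap [Nontrivial ι] (i₀ : ι) : Y → SymplecticQuotient ι :=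
  Quot.lift (fun w => Quot.mk _ ⟨Pi.single i₀ w, single_mem_momentZeroLevel i₀ w⟩) (by
    rintro w _ (rfl | rfl)
    · rfl
    · obtain ⟨g, hg, hneg⟩ := exists_mem_SO_single_neg_eq_mulVec_single i₀
      exact Quot.sound ⟨g, hg, hneg w⟩)

/-- The function on the symplectic quotient induced by the invariant quadratic form `∑ zᵢ²`. -/
def sumSq : SymplecticQuotient ι → ℂ :=
  Quot.lift (fun z => z.1 ⬝ᵥ z.1) (by
    rintro x y ⟨g, hg, hy⟩
    rw [hy, mulVec_dotProduct_mulVec_of_transpose_mul_self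
      (transpose_map_ofReal_mul_self_of_mem_SO hg)])

/-- The function on `ℂ/{±1}` induced by `w ↦ w²`. -/
def sqY : Y → ℂ :=
  Quot.lift (fun w => w ^ 2) (by rintro w _ (rfl | rfl) <;> simp)

theorem isClosedEmbedding_sqY : IsClosedEmbedding sqY := by
  refine .of_continuous_injective_isClosedMap (continuous_quot_lift _ (by fun_prop)) ?_ ?_
  · rintro ⟨a⟩ ⟨b⟩ h
    exact Quot.sound (sq_eq_sq_iff_eq_or_eq_neg.1 h.symm)
  · exact .of_comp_surjective Quot.mk_surjective continuous_quot_mk (isClosedMap_pow ℂ 2)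

theorem continuous_sumSq : Continuous (sumSq : SymplecticQuotient ι → ℂ) :=
  continuous_quot_lift _ (by fun_prop)

variable [Nontrivial ι] (i₀ : ι)

theorem sumSq_comp_axisMap : sumSq ∘ axisMap i₀ = sqY := by
  ext ⟨w⟩
  change Pi.single i₀ w ⬝ᵥ Pi.single i₀ w = w ^ 2
  rw [dotProduct_single, Pi.single_eq_same, pow_two]

theorem continuous_axisMap : Continuous (axisMap i₀) :=
  continuous_quot_lift _ <| continuous_quot_mk.comp <|
    (continuous_single (A := fun _ => ℂ) i₀).subtype_mk _

theorem isEmbedding_axisMap : IsEmbedding (axisMap i₀) :=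
  .of_comp (continuous_axisMap i₀) continuous_sumSq <| by
    rw [sumSq_comp_axisMap]
    exact isClosedEmbedding_sqY.isEmbedding

theorem surjective_axisMap : Function.Surjective (axisMap i₀) := by
  rintro ⟨z, hz⟩
  obtain ⟨g, hg, w, rfl⟩ := exists_mem_SO_eq_mulVec_single_of_mem_momentZeroLevel i₀ hz
  exact ⟨Quot.mk _ w, Quot.sound ⟨g, hg, rfl⟩⟩

end SymplecticQuotient

section Invariants

theorem map_aeval_X_mul_X_homogeneousSubmodule (σ R : Type*) [CommSemiring R] (k : ℕ) :
    (homogeneousSubmodule (σ × σ) R k).map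
        (aeval fun s => X s.1 * X s.2 : MvPolynomial (σ × σ) R →ₐ[R] MvPolynomial σ R).toLinearMap =
      homogeneousSubmodule σ R (2 * k) := by
  rw [← homogeneousSubmodule_one_pow R k, Submodule.map_pow,
    ← homogeneousSubmodule_one_pow R (2 * k), pow_mul, pow_two,
    homogeneousSubmodule_one_eq_span_X, homogeneousSubmodule_one_eq_span_X,
    Submodule.map_span, Submodule.span_mul_span]
  congr 2
  ext p
  simp [Set.mem_mul]

theorem eval_smul_of_isHomogeneous {σ R : Type*} [CommSemiring R] {p : MvPolynomial σ R} {d : ℕ}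
    (hp : p.IsHomogeneous d) (c : R) (x : σ → R) : eval (c • x) p = c ^ d * eval x p := by
  rw [eval_eq, eval_eq, Finset.mul_sum]
  refine Finset.sum_congr rfl fun m hm => ?_
  simp only [Pi.smul_apply, smul_eq_mul, mul_pow, Finset.prod_mul_distrib,
    Finset.prod_pow_eq_pow_sum, hp.degree_eq_sum_deg_support hm, mul_left_comm]

/-- The real-linear coordinate of a complex number that `evalR` attaches to an index in `Bool`:
the imaginary part for `true`, the real part for `false`. -/
def reIm (b : Bool) : ℂ →ₗ[ℝ] ℝ := if b then imLm else reLm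

theorem evalR_eq_eval_reIm {ι : Type} (p : MvPolynomial (ι × Bool) ℝ) (z : ι → ℂ) :
    evalR p z = eval (fun q => reIm q.2 (z q.1)) p := by
  rw [evalR]
  congr 2
  ext ⟨i, b⟩
  cases b <;> rfl

theorem evalR_neg_of_isHomogeneous {ι : Type} {p : MvPolynomial (ι × Bool) ℝ} {d : ℕ}
    (hp : p.IsHomogeneous d) (z : ι → ℂ) : evalR p (-z) = (-1) ^ d * evalR p z := by
  rw [evalR_eq_eval_reIm, evalR_eq_eval_reIm, ← eval_smul_of_isHomogeneous hp]
  congr 2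
  ext q
  simp

theorem evalR_aeval {σ κ : Type} (f : σ → MvPolynomial (κ × Bool) ℝ) (p : MvPolynomial σ ℝ)
    (z : κ → ℂ) : evalR (aeval f p) z = eval (fun s => evalR (f s) z) p := by
  simp only [evalR, ← coe_aeval_eq_eval, RingHom.coe_coe, comp_aeval_apply]

variable {ι : Type}

theorem reIm_map_ofReal_mulVec [Fintype ι] (b : Bool) (g : Matrix ι ι ℝ) (z : ι → ℂ) :
    (fun i => reIm b ((g.map ofReal *ᵥ z) i)) = g *ᵥ fun i => reIm b (z i) := by
  ext i
  simp [mulVec, dotProduct, ← real_smul]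

section Restriction

variable [DecidableEq ι]

/-- Restriction of a real polynomial on `ι → ℂ` to the `i₀`-th coordinate axis. -/
def restrictAxis (i₀ : ι) (q : MvPolynomial (ι × Bool) ℝ) : MvPolynomial (Unit × Bool) ℝ :=
  aeval (fun s : ι × Bool => if s.1 = i₀ then X ((), s.2) else 0) q

theorem isHomogeneous_restrictAxis (i₀ : ι) {q : MvPolynomial (ι × Bool) ℝ} {d : ℕ}
    (hq : q.IsHomogeneous d) : (restrictAxis i₀ q).IsHomogeneous d := by
  rw [← one_mul d]
  refine hq.aeval _ fun s => ?_
  split_ifs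
  exacts [isHomogeneous_X _ _, isHomogeneous_zero _ _ _]

theorem evalR_restrictAxis (i₀ : ι) (q : MvPolynomial (ι × Bool) ℝ) (w : ℂ) :
    evalR (restrictAxis i₀ q) (fun _ => w) = evalR q (Pi.single i₀ w) := by
  rw [restrictAxis, evalR_aeval, evalR_eq_eval_reIm q]
  congr 2
  ext ⟨i, b⟩
  obtain rfl | hi := eq_or_ne i i₀ <;> simp [evalR_eq_eval_reIm, *]

end Restriction

/-- The real polynomial on `ι → ℂ` pairing the real or imaginary parts of a vector selected by
`b` and `c`; for `SO(ι)` these three pairings are the basic quadratic invariants. -/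
def dotPoly (ι : Type) [Fintype ι] (b c : Bool) : MvPolynomial (ι × Bool) ℝ :=
  ∑ i, X (i, b) * X (i, c)

variable [Fintype ι]

theorem isHomogeneous_dotPoly (b c : Bool) : (dotPoly ι b c).IsHomogeneous 2 :=
  .sum _ _ _ fun i _ => (isHomogeneous_X ℝ (i, b)).mul (isHomogeneous_X ℝ (i, c))

theorem evalR_dotPoly (b c : Bool) (z : ι → ℂ) :
    evalR (dotPoly ι b c) z = (fun i => reIm b (z i)) ⬝ᵥ fun i => reIm c (z i) := by
  simp [evalR_eq_eval_reIm, dotPoly, dotProduct]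

variable [DecidableEq ι]

theorem evalR_dotPoly_mulVec (b c : Bool) {g : Matrix ι ι ℝ} (hg : g ∈ SO ι) (z : ι → ℂ) :
    evalR (dotPoly ι b c) (g.map ofReal *ᵥ z) = evalR (dotPoly ι b c) z := by
  rw [evalR_dotPoly, evalR_dotPoly, reIm_map_ofReal_mulVec, reIm_map_ofReal_mulVec,
    mulVec_dotProduct_mulVec_of_transpose_mul_self (transpose_mul_self_of_mem_SO hg)]

theorem evalR_dotPoly_single (b c : Bool) (i₀ : ι) (w : ℂ) :
    evalR (dotPoly ι b c) (Pi.single i₀ w) = reIm b w * reIm c w := by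
  have h : ∀ b, (fun i => reIm b ((Pi.single i₀ w : ι → ℂ) i)) = Pi.single i₀ (reIm b w) :=
    fun b => funext fun i => Pi.apply_single (fun _ => reIm b) (fun _ => map_zero _) i₀ w i
  rw [evalR_dotPoly, h, h, single_dotProduct, Pi.single_eq_same]

theorem exists_invariant_evalR_single_eq_of_even {p : MvPolynomial (Unit × Bool) ℝ} {d : ℕ}
    (hp : p.IsHomogeneous d) (hd : Even d) :
    ∃ q : MvPolynomial (ι × Bool) ℝ, q.IsHomogeneous d ∧
      (∀ g ∈ SO ι, ∀ z, evalR q (g.map ofReal *ᵥ z) = evalR q z) ∧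
      ∀ i₀ w, evalR q (Pi.single i₀ w) = evalR p fun _ => w := by
  obtain ⟨k, rfl⟩ := even_iff_exists_two_mul.1 hd
  obtain ⟨r, hr, rfl⟩ := (map_aeval_X_mul_X_homogeneousSubmodule (Unit × Bool) ℝ k).ge hp
  refine ⟨aeval (fun s => dotPoly ι s.1.2 s.2.2) r,
    hr.aeval _ fun s => isHomogeneous_dotPoly _ _, fun g hg z => ?_, fun i₀ w => ?_⟩
  · simp only [evalR_aeval, evalR_dotPoly_mulVec _ _ hg]
  · simp only [AlgHom.toLinearMap_apply, evalR_aeval, evalR_dotPoly_single]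
    simp [evalR_eq_eval_reIm]

theorem evalR_eq_zero_of_not_even {ι : Type} {p : MvPolynomial (ι × Bool) ℝ} {d : ℕ}
    (hp : p.IsHomogeneous d) (hd : ¬Even d) {z : ι → ℂ} (hz : evalR p (-z) = evalR p z) :
    evalR p z = 0 := by
  rw [evalR_neg_of_isHomogeneous hp, (Nat.not_even_iff_odd.1 hd).neg_one_pow, neg_one_mul] at hz
  exact self_eq_neg.1 hz.symm

theorem exists_invariant_evalR_single_eq {p : MvPolynomial (Unit × Bool) ℝ} {d : ℕ}
    (hp : p.IsHomogeneous d) (hneg : ∀ w : ℂ, evalR p (fun _ => -w) = evalR p fun _ => w) :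
    ∃ q : MvPolynomial (ι × Bool) ℝ, q.IsHomogeneous d ∧
      (∀ g ∈ SO ι, ∀ z, evalR q (g.map ofReal *ᵥ z) = evalR q z) ∧
      ∀ i₀ w, evalR q (Pi.single i₀ w) = evalR p fun _ => w := by
  by_cases hd : Even d
  · exact exists_invariant_evalR_single_eq_of_even hp hd
  · refine ⟨0, isHomogeneous_zero _ _ _, fun _ _ _ => by simp only [evalR, map_zero],
      fun i₀ w => ?_⟩
    rw [evalR_eq_zero_of_not_even hp hd (hneg w), evalR, map_zero]

end Invariants

section RegularFunctions

variable {ι : Type} [Fintype ι] [DecidableEq ι]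

variable (ι) in
/-- The degree-`d` regular functions on the symplectic quotient. -/
def regularFunctions (d : ℕ) : Set (SymplecticQuotient ι → ℝ) :=
  {f | ∃ p : MvPolynomial (ι × Bool) ℝ, p.IsHomogeneous d ∧
    (∀ g ∈ SO ι, ∀ z : ι → ℂ, evalR p (g.map ofReal *ᵥ z) = evalR p z) ∧
    ∀ x : momentZeroLevel ι, f (Quot.mk _ x) = evalR p (x : ι → ℂ)}

variable [Nontrivial ι] (i₀ : ι) {d : ℕ} {f : SymplecticQuotient ι → ℝ}

theorem comp_axisMap_mem_RegY (hf : f ∈ regularFunctions ι d) : f ∘ axisMap i₀ ∈ RegY d := by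
  obtain ⟨q, hq, hinv, hfq⟩ := hf
  refine ⟨restrictAxis i₀ q, isHomogeneous_restrictAxis i₀ hq, fun w => ?_, fun w => ?_⟩
  · obtain ⟨g, hg, hneg⟩ := exists_mem_SO_single_neg_eq_mulVec_single i₀
    rw [evalR_restrictAxis, evalR_restrictAxis, hneg, hinv g hg]
  · rw [evalR_restrictAxis]
    exact hfq _

theorem mem_regularFunctions_of_comp_axisMap_mem_RegY (hf : f ∘ axisMap i₀ ∈ RegY d) :
    f ∈ regularFunctions ι d := by
  obtain ⟨p, hp, hneg, hfp⟩ := hf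
  obtain ⟨q, hq, hinv, hqp⟩ := exists_invariant_evalR_single_eq (ι := ι) hp hneg
  refine ⟨q, hq, hinv, ?_⟩
  rintro ⟨z, hz⟩
  obtain ⟨g, hg, w, rfl⟩ := exists_mem_SO_eq_mulVec_single_of_mem_momentZeroLevel i₀ hz
  calc f (Quot.mk _ ⟨g.map ofReal *ᵥ Pi.single i₀ w, hz⟩)
      = f (axisMap i₀ (Quot.mk _ w)) := congrArg f (Quot.sound ⟨g, hg, rfl⟩).symm
    _ = evalR q (Pi.single i₀ w) := (hfp w).trans (hqp i₀ w).symm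
    _ = evalR q (g.map ofReal *ᵥ Pi.single i₀ w) := (hinv g hg _).symm

theorem comp_axisMap_mem_RegY_iff : f ∘ axisMap i₀ ∈ RegY d ↔ f ∈ regularFunctions ι d :=
  ⟨mem_regularFunctions_of_comp_axisMap_mem_RegY i₀, comp_axisMap_mem_RegY i₀⟩

end RegularFunctions

theorem graded_regular_diffeomorphism_R2_to_C_mod_pm1_general (ι : Type) [Fintype ι]
    [DecidableEq ι] [Nontrivial ι] :
    ∃ χ : SymplecticQuotient ι ≃ₜ Y,
      ∀ d : ℕ, (fun f : Y → ℝ => f ∘ ⇑χ) '' RegY d = regularFunctions ι d := by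
  obtain ⟨i₀⟩ : Nonempty ι := inferInstance
  let ψ := (isEmbedding_axisMap i₀).toHomeomorphOfSurjective (surjective_axisMap i₀)
  refine ⟨ψ.symm, fun d => ?_⟩
  ext f
  rw [← comp_axisMap_mem_RegY_iff i₀]
  constructor
  · rintro ⟨f, hf, rfl⟩
    rwa [Function.comp_assoc, show ψ.symm ∘ axisMap i₀ = id from ψ.symm_comp_self]
  · exact fun hf => ⟨_, hf, congrArg (f ∘ ·) ψ.self_comp_symm⟩

/-- The symplectic quotient of R₂ admits a ℤ-graded regular diffeomorphism to `ℂ/{±1}`. -/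
theorem graded_regular_diffeomorphism_R2_to_C_mod_pm1 :
    ∃ χ : M₀ ≃ₜ Y, ∀ d : ℕ, (fun f : Y → ℝ => f ∘ ⇑χ) '' RegY d = RegM d := by
  exact graded_regular_diffeomorphism_R2_to_C_mod_pm1_general (Fin 3)

end

end Stmt14
end

section
/- Let SU(2) act diagonally on V = ℂ² ⊕ ℂ² (standard action on each factor), with moment map J : V → su(2)*, J(v,w)(ξ) = Im(⟨ξv, v⟩ + ⟨ξw, w⟩) for ξ ∈ su(2), where ⟨u,v⟩ = Σᵢ uᵢ\overline{vᵢ}, and set M = J⁻¹(0), M₀ = M/SU(2). Let Γ = {±1} act on ℂ by multiplication, with orbit space ℂ/Γ. Then there exists a ℤ-graded regular diffeomorphism from M₀ to ℂ/Γ. -/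
/-!
Statement 15: The symplectic quotient of the diagonal SU(2)-action on ℂ² ⊕ ℂ² (the
SU(2)-module 2R₁), with moment map `J(v,w)(ξ) = Im(⟨ξv,v⟩ + ⟨ξw,w⟩)`, is ℤ-graded
regularly diffeomorphic to `ℂ/{±1}`.
-/

namespace Stmt15

noncomputable section

open MvPolynomial Complex

/-- Evaluation of a real polynomial in the real coordinates (indexed by `ι × Bool`) at a
point of `ι → ℂ`. -/
def evalR {ι : Type} (p : MvPolynomial (ι × Bool) ℝ) (z : ι → ℂ) : ℝ :=
  MvPolynomial.eval (fun q => if q.2 then (z q.1).im else (z q.1).re) p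

/-- Membership in SU(2). -/
def SU2mem (g : Matrix (Fin 2) (Fin 2) ℂ) : Prop :=
  g ∈ Matrix.unitaryGroup (Fin 2) ℂ ∧ g.det = 1

/-- The diagonal action of a matrix `g` on ℂ² ⊕ ℂ². -/
def act (g : Matrix (Fin 2) (Fin 2) ℂ) (z : (Fin 2 → ℂ) × (Fin 2 → ℂ)) :
    (Fin 2 → ℂ) × (Fin 2 → ℂ) :=
  (g.mulVec z.1, g.mulVec z.2)

/-- Hermitian pairing `⟨ξ v, v⟩`. -/
def pair (ξ : Matrix (Fin 2) (Fin 2) ℂ) (v : Fin 2 → ℂ) : ℂ :=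
  ∑ i, ξ.mulVec v i * (starRingEnd ℂ) (v i)

/-- The zero set `M = J⁻¹(0)` of the moment map `J(v,w)(ξ) = Im(⟨ξv,v⟩ + ⟨ξw,w⟩)`, `ξ`
ranging over `su(2)` (traceless skew-hermitian matrices). -/
def Mset : Set ((Fin 2 → ℂ) × (Fin 2 → ℂ)) :=
  {z | ∀ ξ : Matrix (Fin 2) (Fin 2) ℂ, ξ.trace = 0 → star ξ = -ξ →
    (pair ξ z.1 + pair ξ z.2).im = 0}

/-- Orbit equivalence on `M` for the SU(2)-action. -/
def relM (x y : Mset) : Prop :=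
  ∃ g : Matrix (Fin 2) (Fin 2) ℂ, SU2mem g ∧
    (y : (Fin 2 → ℂ) × (Fin 2 → ℂ)) = act g (x : (Fin 2 → ℂ) × (Fin 2 → ℂ))

/-- The symplectic quotient `M₀ = M/SU(2)` with the quotient topology. -/
def M₀ : Type := Quot relM

instance : TopologicalSpace M₀ := instTopologicalSpaceQuot

/-- The complex coordinates of a point of ℂ² ⊕ ℂ². -/
def cc (z : (Fin 2 → ℂ) × (Fin 2 → ℂ)) : Fin 2 ⊕ Fin 2 → ℂ := Sum.elim z.1 z.2

/-- The degree-`d` regular functions on `M₀`. -/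
def RegM (d : ℕ) : Set (M₀ → ℝ) :=
  {f | ∃ p : MvPolynomial ((Fin 2 ⊕ Fin 2) × Bool) ℝ, p.IsHomogeneous d ∧
    (∀ g : Matrix (Fin 2) (Fin 2) ℂ, SU2mem g → ∀ z : (Fin 2 → ℂ) × (Fin 2 → ℂ),
      evalR p (cc (act g z)) = evalR p (cc z)) ∧
    ∀ x : Mset, f (Quot.mk _ x) = evalR p (cc (x : (Fin 2 → ℂ) × (Fin 2 → ℂ)))}

/-- Orbit equivalence on ℂ for the action of `Γ = {±1}`. -/
def relC (z v : ℂ) : Prop := v = z ∨ v = -z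

/-- The orbifold `ℂ/{±1}` with the quotient topology. -/
def Y : Type := Quot relC

instance : TopologicalSpace Y := instTopologicalSpaceQuot

/-- The degree-`d` regular functions on `ℂ/{±1}`. -/
def RegY (d : ℕ) : Set (Y → ℝ) :=
  {f | ∃ p : MvPolynomial (Unit × Bool) ℝ, p.IsHomogeneous d ∧
    (∀ z : ℂ, evalR p (fun _ => -z) = evalR p (fun _ => z)) ∧
    ∀ z : ℂ, f (Quot.mk _ z) = evalR p (fun _ => z)}

/-!
The columns of a point of `V` form a 2×2 matrix `A`, and `J(v,w)(ξ) = Im tr(ξ A Aᴴ)`; hence `M` is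
the set of scalar multiples of unitary matrices, and two such matrices lie in the same
`SU(2)`-orbit exactly when their determinants agree. The scalar matrices `z • 1` form a Cartan
slice, on which `det` is `z ^ 2`: so `det` on `M₀` and `z ↦ z ^ 2` on `ℂ/(±1)` are both
homeomorphisms onto `ℂ`. Restricting an invariant polynomial to the slice gives an even one, since
`-1 ∈ SU(2)`. Conversely an even homogeneous polynomial is a polynomial in the quadratic monomials
`x²`, `xy`, `y²`, and these are restrictions of combinations of the invariants `Re det`, `Im det`
and `‖v‖² + ‖w‖²`.
-/

section Topology

variable {W Z : Type*} [TopologicalSpace W] [TopologicalSpace Z]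

lemma isHomeomorph_quotLift {r : W → W → Prop} {f : W → Z} (hf : Topology.IsQuotientMap f)
    (hr : ∀ x y, r x y ↔ f x = f y) : IsHomeomorph (Quot.lift f fun x y => (hr x y).1) := by
  rw [isHomeomorph_iff_isQuotientMap_injective]
  refine ⟨.of_comp continuous_quot_mk (continuous_quot_lift _ hf.continuous) hf, ?_⟩
  rintro ⟨x⟩ ⟨y⟩ h
  exact Quot.sound ((hr x y).2 h)

end Topology

section Matrix

open scoped Matrix ComplexOrder

variable {n : Type*} [Fintype n] [DecidableEq n]

lemma exists_eq_smul_one_iff_forall_im_trace_mul_eq_zero {H : Matrix n n ℂ}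
    (hH : H.IsHermitian) :
    (∃ c : ℂ, H = c • 1) ↔
      ∀ ξ : Matrix n n ℂ, ξ.trace = 0 → star ξ = -ξ → (ξ * H).trace.im = 0 := by
  constructor
  · rintro ⟨c, rfl⟩ ξ hξ -
    simp [hξ]
  · intro h
    rcases isEmpty_or_nonempty n with _ | _
    · exact ⟨0, Subsingleton.elim _ _⟩
    set c : ℂ := H.trace / Fintype.card n
    set K : Matrix n n ℂ := H - c • 1 with hK
    have hc : star c = c := by
      simp [c, ← Matrix.trace_conjTranspose, hH.eq]
    have hKh : Kᴴ = K := by simp [hK, hH.eq, hc]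
    have hKtr : K.trace = 0 := by simp [hK, c]
    -- `I • K` lies in `su(n)`, and pairing it with `H` gives the squared Frobenius norm of `K`.
    have hre : (Kᴴ * K).trace.re = 0 := by
      have hKH := h (I • K) (by simp [hKtr]) (by simp [Matrix.star_eq_conjTranspose, hKh])
      have hKK : (Kᴴ * K).trace = (K * H).trace := by
        rw [hKh]
        nth_rw 2 [hK]
        simp [mul_sub, hKtr]
      simpa [hKK] using hKH
    have him : (Kᴴ * K).trace.im = 0 :=
      (Complex.nonneg_iff.1 (Matrix.posSemidef_conjTranspose_mul_self K).trace_nonneg).2.symm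
    have hK0 : K = 0 := Matrix.trace_conjTranspose_mul_self_eq_zero_iff.1 (Complex.ext hre him)
    exact ⟨c, sub_eq_zero.1 hK0⟩

lemma mul_eq_smul_one_comm {K : Type*} [Field K] {A B : Matrix n n K} {c : K} (hc : c ≠ 0) :
    A * B = c • 1 ↔ B * A = c • 1 := by
  rw [← inv_smul_eq_iff₀ hc, ← inv_smul_eq_iff₀ hc, ← smul_mul_assoc, ← mul_smul_comm,
    mul_eq_one_comm]

lemma exists_specialUnitary_mul_eq {R : Type*} [CommRing R] [StarRing R] {A B : Matrix n n R}
    (h : Aᴴ * A = Bᴴ * B) (hA : IsUnit A.det) (hdet : A.det = B.det) :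
    ∃ g ∈ Matrix.specialUnitaryGroup n R, B = g * A := by
  refine ⟨B * A⁻¹, ⟨?_, ?_⟩, (Matrix.nonsing_inv_mul_cancel_right _ _ hA).symm⟩
  · refine Matrix.mem_unitaryGroup_iff'.2 ?_
    calc star (B * A⁻¹) * (B * A⁻¹)
        = (A⁻¹)ᴴ * (Bᴴ * B) * A⁻¹ := by
          simp only [Matrix.star_eq_conjTranspose, Matrix.conjTranspose_mul, mul_assoc]
      _ = (A * A⁻¹)ᴴ * (A * A⁻¹) := by
          simp only [← h, Matrix.conjTranspose_mul, mul_assoc]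
      _ = 1 := by simp [Matrix.mul_nonsing_inv _ hA]
  · simp [← hdet, Matrix.det_nonsing_inv, Ring.mul_inverse_cancel _ hA]

lemma nonneg_of_mul_conjTranspose_eq_smul_one [Nonempty n] {A : Matrix n n ℂ} {c : ℂ}
    (h : A * Aᴴ = c • 1) : 0 ≤ c := by
  have hdiag : 0 ≤ (A * Aᴴ) (Classical.arbitrary n) (Classical.arbitrary n) :=
    (Matrix.posSemidef_self_mul_conjTranspose A).diag_nonneg
  simpa [h] using hdiag

lemma norm_pow_card_eq_of_mul_conjTranspose_eq_smul_one {A : Matrix n n ℂ} {c : ℂ}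
    (h : A * Aᴴ = c • 1) : ‖c‖ ^ Fintype.card n = ‖A.det‖ ^ 2 := by
  have hdet := congrArg (fun B : Matrix n n ℂ => ‖B.det‖) h
  simpa [sq] using hdet.symm

lemma exists_specialUnitary_mul_eq_of_scaled_unitary {A B : Matrix n n ℂ} {a b : ℂ}
    (hA : A * Aᴴ = a • 1) (hB : B * Bᴴ = b • 1) (hdet : A.det = B.det) :
    ∃ g ∈ Matrix.specialUnitaryGroup n ℂ, B = g * A := by
  rcases isEmpty_or_nonempty n with _ | _
  · exact ⟨1, one_mem _, Subsingleton.elim _ _⟩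
  have hA_card := norm_pow_card_eq_of_mul_conjTranspose_eq_smul_one hA
  obtain rfl : a = b := by
    have hnorm : ‖a‖ = ‖b‖ := by
      refine (pow_left_inj₀ (norm_nonneg a) (norm_nonneg b) (Fintype.card_ne_zero (α := n))).1 ?_
      rw [hA_card, hdet, norm_pow_card_eq_of_mul_conjTranspose_eq_smul_one hB]
    calc a = ‖a‖ := eq_coe_norm_of_nonneg (nonneg_of_mul_conjTranspose_eq_smul_one hA)
      _ = ‖b‖ := by rw [hnorm]
      _ = b := (eq_coe_norm_of_nonneg (nonneg_of_mul_conjTranspose_eq_smul_one hB)).symm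
  rcases eq_or_ne a 0 with rfl | ha
  · rw [zero_smul, Matrix.self_mul_conjTranspose_eq_zero] at hA hB
    exact ⟨1, one_mem _, by simp [hA, hB]⟩
  · have hdet_ne : A.det ≠ 0 := by
      rintro h0
      simp [h0, ha] at hA_card
    refine exists_specialUnitary_mul_eq ?_ hdet_ne.isUnit hdet
    rw [(mul_eq_smul_one_comm ha).1 hA, (mul_eq_smul_one_comm ha).1 hB]

end Matrix

section Polynomial

variable {σ R : Type*} [CommSemiring R]

lemma isHomogeneous_X_mul_X (i j : σ) :
    (X i * X j : MvPolynomial σ R).IsHomogeneous 2 :=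
  (isHomogeneous_X R i).mul (isHomogeneous_X R j)

lemma map_aeval_X_mul_X_homogeneousSubmodule (k : ℕ) :
    (homogeneousSubmodule (σ × σ) R k).map
        (aeval fun i : σ × σ => (X i.1 * X i.2 : MvPolynomial σ R)).toLinearMap =
      homogeneousSubmodule σ R (2 * k) := by
  rw [← homogeneousSubmodule_one_pow R (2 * k), pow_mul, ← homogeneousSubmodule_one_pow,
    Submodule.map_pow, homogeneousSubmodule_one_eq_span_X, homogeneousSubmodule_one_eq_span_X,
    sq, Submodule.span_mul_span, Submodule.map_span, ← Set.range_comp]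
  congr 2
  ext p
  simp [Set.mem_mul]

lemma eval_smul_of_isHomogeneous {p : MvPolynomial σ R} {d : ℕ} (hp : p.IsHomogeneous d) (c : R)
    (x : σ → R) : eval (c • x) p = c ^ d * eval x p := by
  rw [eval_eq, eval_eq, Finset.mul_sum]
  refine Finset.sum_congr rfl fun m hm => ?_
  simp only [Pi.smul_apply, smul_eq_mul, mul_pow, Finset.prod_mul_distrib,
    Finset.prod_pow_eq_pow_sum, hp.degree_eq_sum_deg_support hm]
  ring

end Polynomial

section Evaluation

variable {ι : Type}

lemma evalR_aeval {σ : Type*} (u : σ → MvPolynomial (ι × Bool) ℝ) (q : MvPolynomial σ ℝ)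
    (z : ι → ℂ) : evalR (aeval u q) z = eval (fun i => evalR (u i) z) q := by
  simp only [evalR, ← coe_aeval_eq_eval, RingHom.coe_coe, ← AlgHom.comp_apply, comp_aeval]

lemma evalR_neg_of_odd {p : MvPolynomial (ι × Bool) ℝ} {d : ℕ} (hp : p.IsHomogeneous d)
    (hd : Odd d) (z : ι → ℂ) : evalR p (-z) = -evalR p z := by
  have h := eval_smul_of_isHomogeneous hp (-1) fun q => if q.2 then (z q.1).im else (z q.1).re
  rw [hd.neg_one_pow, neg_one_mul] at h
  rw [evalR, evalR, ← h]
  congr 2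
  ext q
  split_ifs <;> simp [*]

end Evaluation

section Moment

open scoped Matrix

/-- The matrix with columns `v`, `w` representing a point `(v, w)` of `ℂ² ⊕ ℂ²`; it turns the
diagonal action into left multiplication. -/
def colMatrix (z : (Fin 2 → ℂ) × (Fin 2 → ℂ)) : Matrix (Fin 2) (Fin 2) ℂ :=
  !![z.1 0, z.2 0; z.1 1, z.2 1]

lemma colMatrix_injective : Function.Injective colMatrix := by
  intro x y h
  have h_entry (i j : Fin 2) : colMatrix x i j = colMatrix y i j := by rw [h]
  refine Prod.ext (funext fun i => ?_) (funext fun i => ?_)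
  · fin_cases i
    exacts [h_entry 0 0, h_entry 1 0]
  · fin_cases i
    exacts [h_entry 0 1, h_entry 1 1]

lemma colMatrix_act (g : Matrix (Fin 2) (Fin 2) ℂ) (z : (Fin 2 → ℂ) × (Fin 2 → ℂ)) :
    colMatrix (act g z) = g * colMatrix z := by
  ext i j
  fin_cases i <;> fin_cases j <;>
    simp [colMatrix, act, Matrix.mul_apply]

lemma det_colMatrix_act {g : Matrix (Fin 2) (Fin 2) ℂ} (hg : SU2mem g)
    (z : (Fin 2 → ℂ) × (Fin 2 → ℂ)) : (colMatrix (act g z)).det = (colMatrix z).det := by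
  rw [colMatrix_act, Matrix.det_mul, hg.2, one_mul]

lemma continuous_det_colMatrix :
    Continuous fun z : (Fin 2 → ℂ) × (Fin 2 → ℂ) => (colMatrix z).det := by
  simp only [colMatrix, Matrix.det_fin_two_of]
  fun_prop

lemma pair_add_pair (ξ : Matrix (Fin 2) (Fin 2) ℂ) (z : (Fin 2 → ℂ) × (Fin 2 → ℂ)) :
    pair ξ z.1 + pair ξ z.2 = (ξ * (colMatrix z * (colMatrix z)ᴴ)).trace := by
  simp only [pair, colMatrix, Matrix.mulVec, dotProduct, Matrix.trace, Matrix.diag_apply,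
    Matrix.mul_apply, Matrix.conjTranspose_apply, Fin.sum_univ_two, Matrix.of_apply,
    Matrix.cons_val', Matrix.cons_val_fin_one, Matrix.cons_val_zero, Matrix.cons_val_one,
    RCLike.star_def]
  ring

lemma mem_Mset_iff {z : (Fin 2 → ℂ) × (Fin 2 → ℂ)} :
    z ∈ Mset ↔ ∃ c : ℂ, colMatrix z * (colMatrix z)ᴴ = c • 1 := by
  rw [exists_eq_smul_one_iff_forall_im_trace_mul_eq_zero
    (Matrix.isHermitian_mul_conjTranspose_self _)]
  simp only [Mset, Set.mem_ofPred_eq, pair_add_pair]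

lemma relM_iff (x y : Mset) : relM x y ↔ (colMatrix x).det = (colMatrix y).det := by
  constructor
  · rintro ⟨g, hg, hy⟩
    rw [hy, det_colMatrix_act hg]
  · intro hdet
    obtain ⟨a, ha⟩ := mem_Mset_iff.1 x.2
    obtain ⟨b, hb⟩ := mem_Mset_iff.1 y.2
    obtain ⟨g, hg, hy⟩ := exists_specialUnitary_mul_eq_of_scaled_unitary ha hb hdet
    exact ⟨g, hg, colMatrix_injective (by rw [hy, colMatrix_act])⟩

end Moment

section Slice

/-- The Cartan slice `z ↦ (z e₁, z e₂)`, i.e. the scalar matrices; every `SU(2)`-orbit in `M`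
meets it in an orbit of `±1`. -/
def slice (z : ℂ) : (Fin 2 → ℂ) × (Fin 2 → ℂ) := (![z, 0], ![0, z])

lemma colMatrix_slice (z : ℂ) : colMatrix (slice z) = z • 1 := by
  simp [colMatrix, slice, Matrix.one_fin_two]

lemma det_colMatrix_slice (z : ℂ) : (colMatrix (slice z)).det = z ^ 2 := by
  simp [colMatrix_slice]

lemma continuous_slice : Continuous slice := by
  unfold slice
  fun_prop

lemma slice_mem (z : ℂ) : slice z ∈ Mset :=
  mem_Mset_iff.2 ⟨z * star z, by simp [colMatrix_slice, smul_smul, mul_comm]⟩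

lemma act_neg_one_slice (z : ℂ) : act (-1) (slice z) = slice (-z) :=
  colMatrix_injective (by simp [colMatrix_act, colMatrix_slice])

lemma SU2mem_neg_one : SU2mem (-1) :=
  ⟨by simp [Matrix.mem_unitaryGroup_iff], by simp [Matrix.det_neg]⟩

lemma exists_relM_slice (x : Mset) : ∃ z : ℂ, relM x ⟨slice z, slice_mem z⟩ := by
  obtain ⟨z, hz⟩ := IsAlgClosed.exists_pow_nat_eq (colMatrix x).det two_pos
  exact ⟨z, (relM_iff _ _).2 (by rw [det_colMatrix_slice, hz])⟩

end Slice

section Homeomorphism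

lemma isQuotientMap_sq : Topology.IsQuotientMap fun z : ℂ => z ^ 2 :=
  (Complex.isOpenQuotientMap_pow 2).isQuotientMap

lemma isQuotientMap_det : Topology.IsQuotientMap fun x : Mset => (colMatrix x).det := by
  refine .of_comp (continuous_slice.subtype_mk slice_mem)
    (continuous_det_colMatrix.comp continuous_subtype_val) ?_
  simpa only [Function.comp_def, det_colMatrix_slice] using isQuotientMap_sq

lemma relC_iff (z v : ℂ) : relC z v ↔ z ^ 2 = v ^ 2 := by
  rw [relC, eq_comm (a := z ^ 2), sq_eq_sq_iff_eq_or_eq_neg]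

/-- The homeomorphism `M₀ ≃ ℂ` induced by the determinant. -/
def detHomeomorph : M₀ ≃ₜ ℂ := (isHomeomorph_quotLift isQuotientMap_det relM_iff).homeomorph

/-- The homeomorphism `ℂ/(±1) ≃ ℂ` induced by squaring. -/
def sqHomeomorph : Y ≃ₜ ℂ := (isHomeomorph_quotLift isQuotientMap_sq relC_iff).homeomorph

/-- The homeomorphism `M₀ ≃ ℂ/(±1)` matching the determinant with the square. -/
def quotientHomeomorph : M₀ ≃ₜ Y := detHomeomorph.trans sqHomeomorph.symm

lemma quotientHomeomorph_mk_slice (z : ℂ) :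
    quotientHomeomorph (Quot.mk relM ⟨slice z, slice_mem z⟩) = Quot.mk relC z :=
  sqHomeomorph.symm_apply_eq.2 (det_colMatrix_slice z)

end Homeomorphism

section Invariants

open scoped Matrix

/-- The algebra `ℝ[V]^{SU(2)}` of invariant real polynomials on `V = ℂ² ⊕ ℂ²`. -/
def invariants : Subalgebra ℝ (MvPolynomial ((Fin 2 ⊕ Fin 2) × Bool) ℝ) where
  carrier := {P | ∀ g : Matrix (Fin 2) (Fin 2) ℂ, SU2mem g →
    ∀ z : (Fin 2 → ℂ) × (Fin 2 → ℂ), evalR P (cc (act g z)) = evalR P (cc z)}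
  mul_mem' hP hQ g hg z := by
    simpa [evalR] using congrArg₂ (· * ·) (hP g hg z) (hQ g hg z)
  add_mem' hP hQ g hg z := by
    simpa [evalR] using congrArg₂ (· + ·) (hP g hg z) (hQ g hg z)
  algebraMap_mem' r g _ z := by simp [evalR, algebraMap_eq]

/-- The real part of the determinant invariant. -/
def detRe : MvPolynomial ((Fin 2 ⊕ Fin 2) × Bool) ℝ :=
  X (.inl 0, false) * X (.inr 1, false) - X (.inl 0, true) * X (.inr 1, true) -
    (X (.inr 0, false) * X (.inl 1, false) - X (.inr 0, true) * X (.inl 1, true))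

/-- The imaginary part of the determinant invariant. -/
def detIm : MvPolynomial ((Fin 2 ⊕ Fin 2) × Bool) ℝ :=
  X (.inl 0, false) * X (.inr 1, true) + X (.inl 0, true) * X (.inr 1, false) -
    (X (.inr 0, false) * X (.inl 1, true) + X (.inr 0, true) * X (.inl 1, false))

/-- The norm invariant `‖v‖² + ‖w‖²`. -/
def sqNorm : MvPolynomial ((Fin 2 ⊕ Fin 2) × Bool) ℝ := ∑ q, X q * X q

lemma isHomogeneous_detRe : detRe.IsHomogeneous 2 :=
  ((isHomogeneous_X_mul_X _ _).sub (isHomogeneous_X_mul_X _ _)).sub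
    ((isHomogeneous_X_mul_X _ _).sub (isHomogeneous_X_mul_X _ _))

lemma isHomogeneous_detIm : detIm.IsHomogeneous 2 :=
  ((isHomogeneous_X_mul_X _ _).add (isHomogeneous_X_mul_X _ _)).sub
    ((isHomogeneous_X_mul_X _ _).add (isHomogeneous_X_mul_X _ _))

lemma isHomogeneous_sqNorm : sqNorm.IsHomogeneous 2 :=
  IsHomogeneous.sum _ _ _ fun q _ => isHomogeneous_X_mul_X q q

lemma evalR_detRe (z : (Fin 2 → ℂ) × (Fin 2 → ℂ)) : evalR detRe (cc z) = (colMatrix z).det.re := by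
  simp [detRe, evalR, cc, colMatrix, Matrix.det_fin_two]

lemma evalR_detIm (z : (Fin 2 → ℂ) × (Fin 2 → ℂ)) : evalR detIm (cc z) = (colMatrix z).det.im := by
  simp [detIm, evalR, cc, colMatrix, Matrix.det_fin_two]

lemma evalR_sqNorm (z : (Fin 2 → ℂ) × (Fin 2 → ℂ)) :
    evalR sqNorm (cc z) = ((colMatrix z)ᴴ * colMatrix z).trace.re := by
  simp only [sqNorm, evalR, cc, Fintype.sum_prod_type, Fintype.sum_bool, Fintype.sum_sum_type,
    Fin.sum_univ_two, map_add, map_mul, eval_X, Bool.false_eq_true, ↓reduceIte, Sum.elim_inl,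
    Sum.elim_inr, colMatrix, Matrix.trace, Matrix.diag_apply, Matrix.mul_apply,
    Matrix.conjTranspose_apply, Matrix.of_apply, Matrix.cons_val', Matrix.cons_val_fin_one,
    Matrix.cons_val_zero, Matrix.cons_val_one, RCLike.star_def, add_re, mul_re, conj_re, conj_im]
  ring

lemma detRe_mem_invariants : detRe ∈ invariants := fun g hg z => by
  rw [evalR_detRe, evalR_detRe, det_colMatrix_act hg]

lemma detIm_mem_invariants : detIm ∈ invariants := fun g hg z => by
  rw [evalR_detIm, evalR_detIm, det_colMatrix_act hg]

lemma sqNorm_mem_invariants : sqNorm ∈ invariants := fun g hg z => by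
  have hgg : gᴴ * g = 1 := Matrix.mem_unitaryGroup_iff'.1 hg.1
  rw [evalR_sqNorm, evalR_sqNorm, colMatrix_act, Matrix.conjTranspose_mul, Matrix.mul_assoc,
    ← Matrix.mul_assoc gᴴ, hgg, Matrix.one_mul]

/-- For each quadratic monomial `x²`, `xy`, `y²` in the real coordinates of `ℂ`, an invariant on
`V` whose restriction to the slice is that monomial; `sqNorm`, `detRe` and `detIm` restrict to
`2 (x² + y²)`, `x² - y²` and `2 x y`. -/
def quadraticInvariant :
    (Unit × Bool) × (Unit × Bool) → MvPolynomial ((Fin 2 ⊕ Fin 2) × Bool) ℝ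
  | ((_, false), (_, false)) => (1 / 4 : ℝ) • sqNorm + (1 / 2 : ℝ) • detRe
  | ((_, true), (_, true)) => (1 / 4 : ℝ) • sqNorm - (1 / 2 : ℝ) • detRe
  | _ => (1 / 2 : ℝ) • detIm

lemma isHomogeneous_quadraticInvariant (i : (Unit × Bool) × (Unit × Bool)) :
    (quadraticInvariant i).IsHomogeneous 2 := by
  have hsmul {P : MvPolynomial ((Fin 2 ⊕ Fin 2) × Bool) ℝ} (c : ℝ) (hP : P.IsHomogeneous 2) :
      (c • P).IsHomogeneous 2 := (homogeneousSubmodule _ ℝ 2).smul_mem c hP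
  rcases i with ⟨⟨_, _ | _⟩, ⟨_, _ | _⟩⟩
  · exact (hsmul _ isHomogeneous_sqNorm).add (hsmul _ isHomogeneous_detRe)
  · exact hsmul _ isHomogeneous_detIm
  · exact hsmul _ isHomogeneous_detIm
  · exact (hsmul _ isHomogeneous_sqNorm).sub (hsmul _ isHomogeneous_detRe)

lemma quadraticInvariant_mem_invariants (i : (Unit × Bool) × (Unit × Bool)) :
    quadraticInvariant i ∈ invariants := by
  have hsqNorm := invariants.smul_mem sqNorm_mem_invariants (1 / 4)
  have hdetRe := invariants.smul_mem detRe_mem_invariants (1 / 2)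
  have hdetIm := invariants.smul_mem detIm_mem_invariants (1 / 2)
  rcases i with ⟨⟨_, _ | _⟩, ⟨_, _ | _⟩⟩
  exacts [add_mem hsqNorm hdetRe, hdetIm, hdetIm, sub_mem hsqNorm hdetRe]

lemma evalR_quadraticInvariant_slice (i : (Unit × Bool) × (Unit × Bool)) (z : ℂ) :
    evalR (quadraticInvariant i) (cc (slice z)) = evalR (X i.1 * X i.2) fun _ => z := by
  have hdetRe : evalR detRe (cc (slice z)) = z.re * z.re - z.im * z.im := by
    rw [evalR_detRe, det_colMatrix_slice, sq, mul_re]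
  have hdetIm : evalR detIm (cc (slice z)) = z.re * z.im + z.im * z.re := by
    rw [evalR_detIm, det_colMatrix_slice, sq, mul_im]
  have hsqNorm : evalR sqNorm (cc (slice z)) = 2 * (z.re * z.re + z.im * z.im) := by
    have htrace : ((colMatrix (slice z))ᴴ * colMatrix (slice z)).trace = (2 * normSq z : ℝ) := by
      simp [colMatrix_slice, normSq_eq_conj_mul_self, mul_left_comm, mul_comm]
    rw [evalR_sqNorm, htrace, ofReal_re, normSq_apply]
  simp only [evalR] at hdetRe hdetIm hsqNorm ⊢
  rcases i with ⟨⟨_, _ | _⟩, ⟨_, _ | _⟩⟩ <;>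
  · simp only [quadraticInvariant, map_add, map_sub, smul_eval, map_mul, eval_X, ↓reduceIte,
      Bool.false_eq_true]
    linarith

end Invariants

section Restriction

lemma aeval_mem_invariants {σ : Type*} {u : σ → MvPolynomial ((Fin 2 ⊕ Fin 2) × Bool) ℝ}
    (hu : ∀ i, u i ∈ invariants) (q : MvPolynomial σ ℝ) : aeval u q ∈ invariants :=
  fun g hg z => by simp only [evalR_aeval, hu _ g hg z]

lemma exists_invariant_evalR_slice_eq {d : ℕ} {p : MvPolynomial (Unit × Bool) ℝ}
    (hp : p.IsHomogeneous d) (heven : ∀ z : ℂ, evalR p (fun _ => -z) = evalR p fun _ => z) :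
    ∃ P : MvPolynomial ((Fin 2 ⊕ Fin 2) × Bool) ℝ, P.IsHomogeneous d ∧ P ∈ invariants ∧
      ∀ z : ℂ, evalR P (cc (slice z)) = evalR p fun _ => z := by
  rcases Nat.even_or_odd' d with ⟨k, rfl | rfl⟩
  · rw [← mem_homogeneousSubmodule, ← map_aeval_X_mul_X_homogeneousSubmodule] at hp
    obtain ⟨q, hq, rfl⟩ := hp
    refine ⟨aeval quadraticInvariant q, hq.aeval _ isHomogeneous_quadraticInvariant,
      aeval_mem_invariants quadraticInvariant_mem_invariants q, fun z => ?_⟩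
    simp only [AlgHom.toLinearMap_apply, evalR_aeval, evalR_quadraticInvariant_slice]
  · refine ⟨0, isHomogeneous_zero _ _ _, zero_mem _, fun z => ?_⟩
    have hodd : evalR p (fun _ => -z) = -evalR p fun _ => z :=
      evalR_neg_of_odd hp ⟨k, rfl⟩ fun _ => z
    calc evalR 0 (cc (slice z)) = 0 := map_zero _
      _ = evalR p fun _ => z := by linarith [heven z]

/-- The real coordinates of `slice z` as polynomials in the real coordinates of `z`. -/
def sliceCoord : (Fin 2 ⊕ Fin 2) × Bool → MvPolynomial (Unit × Bool) ℝ
  | (.inl 0, b) | (.inr 1, b) => X ((), b)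
  | (.inl 1, _) | (.inr 0, _) => 0

lemma isHomogeneous_sliceCoord (q : (Fin 2 ⊕ Fin 2) × Bool) : (sliceCoord q).IsHomogeneous 1 := by
  rcases q with ⟨i | i, b⟩ <;> fin_cases i
  exacts [isHomogeneous_X _ _, isHomogeneous_zero _ _ _, isHomogeneous_zero _ _ _,
    isHomogeneous_X _ _]

lemma evalR_aeval_sliceCoord (P : MvPolynomial ((Fin 2 ⊕ Fin 2) × Bool) ℝ) (z : ℂ) :
    evalR (aeval sliceCoord P) (fun _ => z) = evalR P (cc (slice z)) := by
  rw [evalR_aeval, evalR]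
  congr 2
  ext ⟨i | i, b⟩ <;> fin_cases i <;> simp [sliceCoord, evalR, cc, slice]

lemma evalR_slice_neg {P : MvPolynomial ((Fin 2 ⊕ Fin 2) × Bool) ℝ} (hP : P ∈ invariants) (z : ℂ) :
    evalR P (cc (slice (-z))) = evalR P (cc (slice z)) := by
  rw [← act_neg_one_slice, hP _ SU2mem_neg_one]

lemma mem_RegM_iff {d : ℕ} {f : M₀ → ℝ} :
    f ∈ RegM d ↔ ∃ P : MvPolynomial ((Fin 2 ⊕ Fin 2) × Bool) ℝ, P.IsHomogeneous d ∧
      P ∈ invariants ∧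
      ∀ z : ℂ, f (Quot.mk relM ⟨slice z, slice_mem z⟩) = evalR P (cc (slice z)) := by
  refine exists_congr fun P => and_congr_right fun _ => and_congr_right fun hP =>
    ⟨fun h z => h ⟨slice z, slice_mem z⟩, fun h x => ?_⟩
  obtain ⟨z, hxz⟩ := exists_relM_slice x
  obtain ⟨g, hg, hgx⟩ : ∃ g, SU2mem g ∧ slice z = act g x := id hxz
  calc f (Quot.mk relM x) = evalR P (cc (slice z)) := by rw [Quot.sound hxz, h]
    _ = evalR P (cc x) := by rw [hgx, hP g hg]

lemma comp_quotientHomeomorph_mem_RegM_iff {d : ℕ} {f : Y → ℝ} :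
    f ∘ quotientHomeomorph ∈ RegM d ↔ f ∈ RegY d := by
  rw [mem_RegM_iff]
  have hslice (z : ℂ) : (f ∘ quotientHomeomorph) (Quot.mk relM ⟨slice z, slice_mem z⟩) =
      f (Quot.mk relC z) := congrArg f (quotientHomeomorph_mk_slice z)
  constructor
  · rintro ⟨P, hPd, hP, hf⟩
    have hd : (aeval sliceCoord P).IsHomogeneous d := by
      simpa only [one_mul] using hPd.aeval _ isHomogeneous_sliceCoord
    refine ⟨aeval sliceCoord P, hd, fun z => ?_, fun z => ?_⟩
    · simp only [evalR_aeval_sliceCoord, evalR_slice_neg hP]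
    · rw [evalR_aeval_sliceCoord, ← hf, hslice]
  · rintro ⟨p, hp, heven, hf⟩
    obtain ⟨P, hPd, hP, hPp⟩ := exists_invariant_evalR_slice_eq hp heven
    exact ⟨P, hPd, hP, fun z => by rw [hPp, ← hf, hslice]⟩

end Restriction

/-- The symplectic quotient of 2R₁ admits a ℤ-graded regular diffeomorphism to `ℂ/{±1}`. -/
theorem graded_regular_diffeomorphism_2R1_to_C_mod_pm1 :
    ∃ χ : M₀ ≃ₜ Y, ∀ d : ℕ, (fun f : Y → ℝ => f ∘ ⇑χ) '' RegY d = RegM d := by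
  refine ⟨quotientHomeomorph, fun d => ?_⟩
  have hpre : RegY d = (fun f : Y → ℝ => f ∘ quotientHomeomorph) ⁻¹' RegM d :=
    Set.ext fun _ => comp_quotientHomeomorph_mem_RegM_iff.symm
  rw [hpre, Set.image_preimage_eq _ quotientHomeomorph.injective.surjective_comp_right]

end

end Stmt15
end
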